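/- arXiv:1312.7554 — 2 statements merged into one kernel-verified Lean document; each statement's English description precedes it below -/
import Mathlib

section
/- Let d ≥ 3 and fix j with 0 ≤ j ≤ d−2. The set {(c,a) ∈ ℂ^{d−1} : the orbit of the critical point c_j under P_{c,a} is unbounded} (equivalently, {(c,a) : g_{c,a}(c_j) > 0}) is an open connected subset of ℂ^{d−1}. -/
open Filter Topology MeasureTheory

/-- Elementary symmetric polynomial of degree `m` in the values of `c`. -/
noncomputable def sigmaE {n : ℕ} (c : Fin n → ℂ) (m : ℕ) : ℂ :=
  (Multiset.map c Finset.univ.val).esymm m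

/-- The polynomial `P_{c,a}`. -/
noncomputable def Pca (d : ℕ) (c : Fin (d - 2) → ℂ) (a : ℂ) (z : ℂ) : ℂ :=
  z ^ d / (d : ℂ) +
    (∑ j ∈ Finset.Icc 2 (d - 1), (-1 : ℂ) ^ (d - j) * sigmaE c (d - j) * z ^ j / (j : ℂ)) +
    a ^ d

/-- The critical points `c₀ = 0, c₁, …, c_{d-2}` of `P_{c,a}`. -/
noncomputable def critPt {d : ℕ} (c : Fin (d - 2) → ℂ) (i : Fin (d - 1)) : ℂ :=
  if h : (i : ℕ) = 0 then 0 else c ⟨(i : ℕ) - 1, by have := i.isLt; omega⟩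

/-- The orbit of `z` under `P_{c,a}` is bounded. -/
def boundedOrbit (d : ℕ) (c : Fin (d - 2) → ℂ) (a z : ℂ) : Prop :=
  Bornology.IsBounded (Set.range fun n => (Pca d c a)^[n] z)

/-- The Green function of `P_{c,a}`. -/
noncomputable def green (d : ℕ) (c : Fin (d - 2) → ℂ) (a z : ℂ) : ℝ :=
  limUnder atTop (fun n : ℕ => Real.log (max 1 ‖(Pca d c a)^[n] z‖) / (d : ℝ) ^ n)

/-- `G(c,a)`, the max of the Green function over the critical points. -/
noncomputable def Gmax (d : ℕ) (c : Fin (d - 2) → ℂ) (a : ℂ) : ℝ :=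
  ⨆ i : Fin (d - 1), green d c a (critPt c i)

/-- The connectedness locus `C_d`. -/
def connLocus (d : ℕ) : Set ((Fin (d - 2) → ℂ) × ℂ) :=
  {p | ∀ i : Fin (d - 1), boundedOrbit d p.1 p.2 (critPt p.1 i)}

/-- The filled-in Julia set of `P_{c,a}`. -/
def filledJulia (d : ℕ) (c : Fin (d - 2) → ℂ) (a : ℂ) : Set ℂ :=
  {z | boundedOrbit d c a z}

noncomputable def auxB (d : ℕ) (c : Fin (d - 2) → ℂ) : ℝ :=
  ∑ j ∈ Finset.Icc 2 (d - 1), ‖sigmaE c (d - j)‖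

noncomputable def auxR (d : ℕ) (c : Fin (d - 2) → ℂ) (a : ℂ) : ℝ :=
  (d : ℝ) * (auxB d c + ‖a‖ + 2)

noncomputable def auxT (d : ℕ) (j : Fin (d - 1)) (c : Fin (d - 2) → ℂ) : ℝ :=
  ‖Pca d c 0 (critPt c j)‖ + (d : ℝ) * (auxB d c + 3) + 1

lemma auxB_nonneg (d : ℕ) (c : Fin (d - 2) → ℂ) : 0 ≤ auxB d c :=
  Finset.sum_nonneg fun _ _ => norm_nonneg _

lemma continuous_sigmaE {n : ℕ} (m : ℕ) : Continuous fun c : Fin n → ℂ => sigmaE c m := by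
  unfold sigmaE
  simp_rw [Finset.esymm_map_val]
  fun_prop

lemma continuous_auxB (d : ℕ) : Continuous (auxB d) := by
  unfold auxB
  exact continuous_finsetSum _ fun j _ => (continuous_sigmaE _).norm

lemma continuous_critPt (d : ℕ) (j : Fin (d - 1)) :
    Continuous fun c : Fin (d - 2) → ℂ => critPt c j := by
  unfold critPt
  split_ifs
  · exact continuous_const
  · exact continuous_apply _

lemma continuous_Pca {X : Type*} [TopologicalSpace X] (d : ℕ) {c : X → Fin (d - 2) → ℂ}
    {a z : X → ℂ} (hc : Continuous c) (ha : Continuous a) (hz : Continuous z) :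
    Continuous fun x => Pca d (c x) (a x) (z x) := by
  unfold Pca
  refine ((hz.pow d).div_const _ |>.add (continuous_finsetSum _ fun j _ => ?_)).add (ha.pow d)
  exact ((continuous_const.mul ((continuous_sigmaE _).comp hc)).mul (hz.pow j)).div_const _

lemma continuous_iter (d : ℕ) (j : Fin (d - 1)) (n : ℕ) :
    Continuous fun p : (Fin (d - 2) → ℂ) × ℂ => (Pca d p.1 p.2)^[n] (critPt p.1 j) := by
  induction n with
  | zero => exact (continuous_critPt d j).comp continuous_fst
  | succ n ih =>
    simp_rw [Function.iterate_succ_apply']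
    exact continuous_Pca d continuous_fst continuous_snd ih

lemma differentiable_iter (d : ℕ) (c : Fin (d - 2) → ℂ) (z : ℂ) (n : ℕ) :
    Differentiable ℂ fun a : ℂ => (Pca d c a)^[n] z := by
  induction n with
  | zero => exact differentiable_const z
  | succ n ih =>
    simp_rw [Function.iterate_succ_apply']
    unfold Pca at ih ⊢
    fun_prop

lemma Pca_growth (d : ℕ) (hd : 3 ≤ d) (c : Fin (d - 2) → ℂ) (a z : ℂ)
    (hz : auxR d c a ≤ ‖z‖) : 2 * ‖z‖ ≤ ‖Pca d c a z‖ := by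
  have hB := auxB_nonneg d c
  have hd' : (3 : ℝ) ≤ d := by exact_mod_cast hd
  have hd0 : (0 : ℝ) < d := by linarith
  have ha := norm_nonneg a
  unfold auxR at hz
  have hz1 : 1 ≤ ‖z‖ := by nlinarith
  have haz : ‖a‖ ≤ ‖z‖ := by nlinarith
  set S := ∑ j ∈ Finset.Icc 2 (d - 1), (-1 : ℂ) ^ (d - j) * sigmaE c (d - j) * z ^ j / (j : ℂ)
    with hS
  have hSle : ‖S‖ ≤ auxB d c * ‖z‖ ^ (d - 1) := by
    unfold auxB
    rw [Finset.sum_mul]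
    refine norm_sum_le_of_le _ fun j hj => ?_
    rw [Finset.mem_Icc] at hj
    have hj' : (1 : ℝ) ≤ j := by exact_mod_cast (by omega : 1 ≤ j)
    simp only [norm_div, norm_mul, norm_pow, norm_neg, norm_one, one_pow, one_mul,
      Complex.norm_natCast]
    refine (div_le_self (by positivity) hj').trans ?_
    gcongr
    exact hj.2
  have hale : ‖a ^ d‖ ≤ ‖a‖ * ‖z‖ ^ (d - 1) := by
    rw [norm_pow]
    obtain ⟨e, rfl⟩ : ∃ e, d = e + 1 := ⟨d - 1, by omega⟩
    rw [pow_succ', Nat.add_sub_cancel]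
    gcongr
  have hmain : ‖z ^ d / (d : ℂ)‖ ≤ ‖Pca d c a z‖ + ‖S‖ + ‖a ^ d‖ := by
    have : z ^ d / (d : ℂ) = Pca d c a z - S - a ^ d := by
      unfold Pca; rw [← hS]; ring
    rw [this]
    exact (norm_sub_le _ _).trans (by gcongr; exact norm_sub_le _ _)
  have hzd : ‖z ^ d / (d : ℂ)‖ = ‖z‖ ^ (d - 1) * (‖z‖ / d) := by
    rw [norm_div, norm_pow, Complex.norm_natCast]
    obtain ⟨e, rfl⟩ : ∃ e, d = e + 1 := ⟨d - 1, by omega⟩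
    rw [pow_succ, Nat.add_sub_cancel]; ring
  have hdiv : auxB d c + ‖a‖ + 2 ≤ ‖z‖ / d := by
    rw [le_div_iff₀ hd0]; linarith
  have hpow : ‖z‖ ≤ ‖z‖ ^ (d - 1) := le_self_pow₀ hz1 (by omega)
  have := mul_le_mul_of_nonneg_left hdiv (by positivity : 0 ≤ ‖z‖ ^ (d - 1))
  nlinarith

lemma unbounded_iff (d : ℕ) (hd : 3 ≤ d) (c : Fin (d - 2) → ℂ) (a z : ℂ) :
    ¬ boundedOrbit d c a z ↔ ∃ n, auxR d c a < ‖(Pca d c a)^[n] z‖ := by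
  constructor
  · intro h
    by_contra! h'
    apply h
    refine (Metric.isBounded_closedBall (x := (0 : ℂ)) (r := auxR d c a)).subset ?_
    rintro _ ⟨n, rfl⟩
    simpa using h' n
  · rintro ⟨n, hn⟩ hb
    have hR : 1 ≤ auxR d c a := by
      have hB := auxB_nonneg d c
      have hd' : (3 : ℝ) ≤ d := by exact_mod_cast hd
      have ha := norm_nonneg a
      unfold auxR; nlinarith
    have key : ∀ k : ℕ, auxR d c a ≤ ‖(Pca d c a)^[n + k] z‖ ∧
        (2 : ℝ) ^ k ≤ ‖(Pca d c a)^[n + k] z‖ := by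
      intro k
      induction k with
      | zero => exact ⟨hn.le, by simpa using hR.trans hn.le⟩
      | succ k ih =>
        have := Pca_growth d hd c a _ ih.1
        rw [← add_assoc, Function.iterate_succ_apply']
        constructor
        · linarith [ih.1]
        · rw [pow_succ]; linarith [ih.2]
    obtain ⟨C, hC⟩ := hb.exists_norm_le
    obtain ⟨k, hk⟩ := pow_unbounded_of_one_lt C (one_lt_two : (1 : ℝ) < 2)
    have := hC _ ⟨n + k, rfl⟩
    linarith [(key k).2]

lemma unbounded_of_large (d : ℕ) (hd : 3 ≤ d) (j : Fin (d - 1)) (c : Fin (d - 2) → ℂ) (a : ℂ)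
    (h : auxT d j c < ‖a‖) : ¬ boundedOrbit d c a (critPt c j) := by
  rw [unbounded_iff d hd]
  refine ⟨1, ?_⟩
  have hB := auxB_nonneg d c
  have hd' : (3 : ℝ) ≤ d := by exact_mod_cast hd
  have hq := norm_nonneg (Pca d c 0 (critPt c j))
  have e : Pca d c a (critPt c j) = a ^ d - (- Pca d c 0 (critPt c j)) := by
    unfold Pca; rw [zero_pow (by omega : d ≠ 0)]; ring
  rw [Function.iterate_one, e]
  refine lt_of_lt_of_le ?_ (norm_sub_norm_le _ _)
  rw [norm_neg, norm_pow]
  unfold auxT at h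
  unfold auxR
  set q := ‖Pca d c 0 (critPt c j)‖
  set B := auxB d c
  have hdB : 0 ≤ (d : ℝ) * B := by positivity
  have h1 : 1 < ‖a‖ := by nlinarith
  have h2 : ‖a‖ ^ 2 ≤ ‖a‖ ^ d := pow_le_pow_right₀ h1.le (by omega)
  have h3 : (q + (d : ℝ) * (B + 3) + 1) * ‖a‖ < ‖a‖ ^ 2 := by
    rw [sq]; gcongr
  have h4 : q ≤ q * ‖a‖ := le_mul_of_one_le_right hq h1.le
  have h5 : (d : ℝ) * B ≤ d * B * ‖a‖ := le_mul_of_one_le_right hdB h1.le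
  have h6 : (d : ℝ) ≤ d * ‖a‖ := le_mul_of_one_le_right (by linarith) h1.le
  nlinarith

lemma isPreconnected_ext (T : ℝ) (hT : 0 < T) : IsPreconnected {a : ℂ | T < ‖a‖} := by
  have h : {a : ℂ | T < ‖a‖} = Complex.exp '' {z : ℂ | Real.log T < z.re} := by
    ext a
    simp only [Set.mem_ofPred_eq, Set.mem_image]
    constructor
    · intro ha
      have ha0 : a ≠ 0 := norm_pos_iff.1 (hT.trans ha)
      exact ⟨Complex.log a, by rw [Complex.log_re]; exact Real.log_lt_log hT ha,
        Complex.exp_log ha0⟩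
    · rintro ⟨z, hz, rfl⟩
      rw [Complex.norm_exp]
      exact (Real.log_lt_iff_lt_exp hT).1 hz
  rw [h]
  exact (convex_halfSpace_re_gt _).isPreconnected.image _ Complex.continuous_exp.continuousOn

lemma isOpen_escape (d : ℕ) (hd : 3 ≤ d) (j : Fin (d - 1)) :
    IsOpen {p : (Fin (d - 2) → ℂ) × ℂ | ¬ boundedOrbit d p.1 p.2 (critPt p.1 j)} := by
  simp_rw [unbounded_iff d hd, Set.ofPred_exists]
  refine isOpen_iUnion fun n => isOpen_lt ?_ (continuous_iter d j n).norm
  unfold auxR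
  exact continuous_const.mul ((((continuous_auxB d).comp continuous_fst).add
    continuous_snd.norm).add continuous_const)

lemma auxT_pos (d : ℕ) (j : Fin (d - 1)) (c : Fin (d - 2) → ℂ) : 0 < auxT d j c := by
  have := auxB_nonneg d c
  unfold auxT; positivity

lemma fiber_preconnected (d : ℕ) (hd : 3 ≤ d) (j : Fin (d - 1)) (c : Fin (d - 2) → ℂ) :
    IsPreconnected {a : ℂ | ¬ boundedOrbit d c a (critPt c j)} := by
  set S := {a : ℂ | ¬ boundedOrbit d c a (critPt c j)} with hS
  have hSo : IsOpen S := (isOpen_escape d hd j).preimage (Continuous.prodMk_right c)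
  set T := auxT d j c with hT
  have hTpos : 0 < T := auxT_pos d j c
  set E := {a : ℂ | T < ‖a‖} with hE
  have hES : E ⊆ S := fun a ha => unbounded_of_large d hd j c a ha
  have hEc : IsPreconnected E := isPreconnected_ext T hTpos
  have key : ∀ a ∈ S, (connectedComponentIn S a ∩ E).Nonempty := by
    intro a ha
    by_contra hne
    set C := connectedComponentIn S a with hC
    have hCo : IsOpen C := hSo.connectedComponentIn
    have hCT : C ⊆ Metric.closedBall 0 T := by
      intro x hx
      by_contra hx'
      have hx2 : T < ‖x‖ := by simpa using hx'
      exact hne ⟨x, hx, hx2⟩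
    have hCb : Bornology.IsBounded C := Metric.isBounded_closedBall.subset hCT
    have haC : a ∈ C := mem_connectedComponentIn ha
    have hfr : ∀ z ∈ frontier C, z ∉ S := by
      intro z hz hzS
      have hzcl : z ∈ closure C := frontier_subset_closure hz
      have hnb : connectedComponentIn S z ∈ 𝓝 z :=
        hSo.connectedComponentIn.mem_nhds (mem_connectedComponentIn hzS)
      obtain ⟨w, hw1, hw2⟩ := mem_closure_iff_nhds.1 hzcl _ hnb
      have e1 := connectedComponentIn_eq hw1
      have e2 := connectedComponentIn_eq hw2
      have hzC : z ∈ C := by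
        rw [hC, e2, ← e1]; exact mem_connectedComponentIn hzS
      rw [hCo.frontier_eq] at hz
      exact hz.2 hzC
    have hTb : ∀ z ∈ closure C, auxR d c z ≤ d * (auxB d c + T + 2) := by
      intro z hz
      have : z ∈ Metric.closedBall (0 : ℂ) T :=
        closure_minimal hCT Metric.isClosed_closedBall hz
      have : ‖z‖ ≤ T := by simpa using this
      unfold auxR; gcongr
    apply ha
    refine (Metric.isBounded_closedBall (x := (0 : ℂ))
      (r := d * (auxB d c + T + 2))).subset ?_
    rintro _ ⟨n, rfl⟩
    rw [mem_closedBall_zero_iff]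
    refine Complex.norm_le_of_forall_mem_frontier_norm_le hCb
      (differentiable_iter d c (critPt c j) n).diffContOnCl (fun z hz => ?_) (subset_closure haC)
    have h1 : boundedOrbit d c z (critPt c j) := not_not.1 (hfr z hz)
    have h2 := (unbounded_iff d hd c z (critPt c j)).not.1 (not_not.2 h1)
    push Not at h2
    exact (h2 n).trans (hTb z (frontier_subset_closure hz))
  refine isPreconnected_of_forall_pair fun x hx y hy => ?_
  refine ⟨connectedComponentIn S x ∪ E ∪ connectedComponentIn S y,
    Set.union_subset (Set.union_subset (connectedComponentIn_subset _ _) hES)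
      (connectedComponentIn_subset _ _),
    Or.inl (Or.inl (mem_connectedComponentIn hx)), Or.inr (mem_connectedComponentIn hy), ?_⟩
  obtain ⟨u, hu1, hu2⟩ := key x hx
  obtain ⟨v, hv1, hv2⟩ := key y hy
  exact (isPreconnected_connectedComponentIn.union u hu1 hu2 hEc).union v (Or.inr hv2) hv1
    isPreconnected_connectedComponentIn

/-- The escape locus of the critical point `c_j` is open and connected. -/
theorem stmt1 (d : ℕ) (hd : 3 ≤ d) (j : Fin (d - 1)) :
    IsOpen {p : (Fin (d - 2) → ℂ) × ℂ | ¬ boundedOrbit d p.1 p.2 (critPt p.1 j)} ∧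
      IsConnected {p : (Fin (d - 2) → ℂ) × ℂ | ¬ boundedOrbit d p.1 p.2 (critPt p.1 j)} := by
  have hTc : Continuous (auxT d j) := by
    unfold auxT
    exact ((continuous_Pca d continuous_id continuous_const (continuous_critPt d j)).norm.add
      (continuous_const.mul ((continuous_auxB d).add continuous_const))).add continuous_const
  have hbig : ∀ M : ℝ, ∃ a : ℂ, M < ‖a‖ := fun M =>
    ⟨((|M| + 1 : ℝ) : ℂ), by
      rw [Complex.norm_real, Real.norm_eq_abs, abs_of_pos (by positivity)]
      linarith [le_abs_self M]⟩
  refine ⟨isOpen_escape d hd j, ?_, ?_⟩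
  · obtain ⟨a, ha⟩ := hbig (auxT d j 0)
    exact ⟨(0, a), unbounded_of_large d hd j 0 a ha⟩
  · refine isPreconnected_of_forall_pair ?_
    rintro ⟨c, a⟩ hca ⟨c', a'⟩ hca'
    have hcomp : IsCompact (segment ℝ c c') := by
      rw [segment_eq_image_lineMap]
      exact isCompact_Icc.image AffineMap.lineMap_continuous
    obtain ⟨M, hM⟩ := hcomp.bddAbove_image hTc.continuousOn
    obtain ⟨b, hb⟩ := hbig M
    have hseg : ∀ x ∈ segment ℝ c c', ¬ boundedOrbit d x b (critPt x j) := fun x hx =>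
      unbounded_of_large d hd j x b ((hM ⟨x, hx, rfl⟩).trans_lt hb)
    have hF : ∀ x : Fin (d - 2) → ℂ, IsPreconnected
        ((fun y : ℂ => (x, y)) '' {a : ℂ | ¬ boundedOrbit d x a (critPt x j)}) := fun x =>
      (fiber_preconnected d hd j x).image _ (Continuous.prodMk_right x).continuousOn
    have hG : IsPreconnected ((fun x => (x, b)) '' segment ℝ c c') :=
      (convex_segment c c').isPreconnected.image _ (Continuous.prodMk_left b).continuousOn
    have hU1 := (hF c).union (c, b) (Set.mem_image_of_mem _ (hseg c (left_mem_segment ℝ c c')))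
      (Set.mem_image_of_mem (fun x => (x, b)) (left_mem_segment ℝ c c')) hG
    have hU2 := hU1.union (c', b)
      (Or.inr (Set.mem_image_of_mem (fun x => (x, b)) (right_mem_segment ℝ c c')))
      (Set.mem_image_of_mem _ (hseg c' (right_mem_segment ℝ c c'))) (hF c')
    refine ⟨_, ?_, ?_, ?_, hU2⟩
    · refine Set.union_subset (Set.union_subset ?_ ?_) ?_
      · rintro _ ⟨y, hy, rfl⟩; exact hy
      · rintro _ ⟨x, hx, rfl⟩; exact hseg x hx
      · rintro _ ⟨y, hy, rfl⟩; exact hy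
    · exact Or.inl (Or.inl ⟨a, hca, rfl⟩)
    · exact Or.inr ⟨a', hca', rfl⟩
end

section
/- Let d ≥ 3 and let (c,a) ∈ ℂ^{d−1} be a parameter with G(c,a) > 0. Set U₁ := {z ∈ ℂ : g_{c,a}(z) < G(c,a)} and let q := #{i ∈ {0,…,d−2} : g_{c,a}(c_i) < G(c,a)} be the number of critical points of P_{c,a} lying in U₁, counted with multiplicity (the critical points c_0 = 0, c_1, …, c_{d−2} are listed with repetition according to multiplicity). Then U₁ has exactly d − q connected components. -/
open Filter Topology MeasureTheory

def Vsub (Z : Finset ℂ) (U : Set ℂ) : Submodule ℝ (Z → ℝ) where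
  carrier := {v | ∀ x y : Z, JoinedIn U (x : ℂ) (y : ℂ) → v x = v y}
  add_mem' := by
    intro v w hv hw x y h
    simp [hv x y h, hw x y h]
  zero_mem' := by intro x y _; rfl
  smul_mem' := by
    intro c v hv x y h
    simp [hv x y h]

lemma mem_Vsub {Z : Finset ℂ} {U : Set ℂ} {v : Z → ℝ} :
    v ∈ Vsub Z U ↔ ∀ x y : Z, JoinedIn U (x : ℂ) (y : ℂ) → v x = v y := Iff.rfl

lemma cc_eq_iff {U : Set ℂ} (hU : IsOpen U) (x y : U) :
    (x : ConnectedComponents U) = y ↔ JoinedIn U (x : ℂ) (y : ℂ) := by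
  haveI := hU.locallyPathConnectedSpace
  rw [ConnectedComponents.coe_eq_coe, ← pathComponent_eq_connectedComponent,
    ← pathComponent_eq_connectedComponent, joinedIn_iff_joined x.2 y.2]
  constructor
  · intro h
    have : y ∈ pathComponent x := by rw [h]; exact mem_pathComponent_self y
    exact this
  · intro h
    exact pathComponent_congr h.symm

lemma card_cc {Z : Finset ℂ} {U : Set ℂ} (hU : IsOpen U) (hZ : ∀ z ∈ Z, z ∈ U)
    (hj : ∀ x ∈ U, ∃ z ∈ Z, JoinedIn U x z) :
    Nat.card (ConnectedComponents U) = Module.finrank ℝ (Vsub Z U) := by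
  let π : Z → ConnectedComponents U := fun z => ((⟨z, hZ z z.2⟩ : U) : ConnectedComponents U)
  have hπ : Function.Surjective π := by
    intro q
    obtain ⟨x, rfl⟩ := ConnectedComponents.surjective_coe q
    obtain ⟨z, hz, h⟩ := hj x x.2
    exact ⟨⟨z, hz⟩, (cc_eq_iff hU _ _).2 h.symm⟩
  haveI : Finite (ConnectedComponents U) := Finite.of_surjective π hπ
  haveI := Fintype.ofFinite (ConnectedComponents U)
  let L := LinearMap.funLeft ℝ ℝ π
  have hL : Function.Injective L := LinearMap.funLeft_injective_of_surjective _ _ _ hπ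
  have hr : LinearMap.range L = Vsub Z U := by
    ext v
    constructor
    · rintro ⟨f, rfl⟩ x y h
      have : π x = π y := (cc_eq_iff hU _ _).2 h
      simp [L, LinearMap.funLeft_apply, this]
    · intro hv
      refine ⟨fun q => v (hπ q).choose, ?_⟩
      ext x
      simp only [L, LinearMap.funLeft_apply]
      apply hv
      exact (cc_eq_iff hU _ _).1 (hπ (π x)).choose_spec
  rw [← hr, LinearMap.finrank_range_of_inj hL]
  simp [Nat.card_eq_fintype_card]

lemma joined_lt {f : ℂ → ℝ} (hf : Continuous f) {x y : ℂ} {U : Set ℂ} (h : JoinedIn U x y) :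
    ∃ p ∈ U, JoinedIn {z | f z ≤ f p} x y := by
  obtain ⟨γ, hγ⟩ := h
  have hc : IsCompact (Set.range γ) := isCompact_range γ.continuous
  obtain ⟨p, hp, hm⟩ := hc.exists_isMaxOn (Set.range_nonempty γ) hf.continuousOn
  obtain ⟨t, rfl⟩ := hp
  refine ⟨γ t, hγ t, γ, fun s => ?_⟩
  exact hm (Set.mem_range_self s)


def lem (Q : Polynomial ℂ) (r : ℝ) : Set ℂ := {z | ‖Q.eval z‖ < r}

lemma lem_open (Q : Polynomial ℂ) (r : ℝ) : IsOpen (lem Q r) :=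
  isOpen_lt Q.continuous.norm continuous_const

lemma lem_mono (Q : Polynomial ℂ) {r s : ℝ} (h : r ≤ s) : lem Q r ⊆ lem Q s :=
  fun _ hz => lt_of_lt_of_le hz h

lemma lem_compact {Q : Polynomial ℂ} (hQ : 0 < Q.degree) (r : ℝ) :
    IsCompact {z | ‖Q.eval z‖ ≤ r} := by
  have h := Q.tendsto_norm_atTop hQ (tendsto_norm_cocompact_atTop (E := ℂ))
  have hb : {z | ‖Q.eval z‖ ≤ r}ᶜ ∈ cocompact ℂ := by
    filter_upwards [h.eventually (eventually_gt_atTop r)] with z hz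
    simpa using hz
  obtain ⟨t, ht, h2⟩ := mem_cocompact.1 hb
  exact ht.of_isClosed_subset (isClosed_le Q.continuous.norm continuous_const)
    (Set.compl_subset_compl.1 h2)

lemma join_root {Q : Polynomial ℂ} (hQ : 0 < Q.degree) {r : ℝ} {x : ℂ} (hx : x ∈ lem Q r) :
    ∃ z ∈ Q.roots.toFinset, JoinedIn (lem Q r) x z := by
  have hQ0 : Q ≠ 0 := by rintro rfl; simp at hQ
  set C := connectedComponentIn (lem Q r) x with hC
  have hCo : IsOpen C := (lem_open Q r).connectedComponentIn
  have hCs : C ⊆ lem Q r := connectedComponentIn_subset _ _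
  have hxC : x ∈ C := mem_connectedComponentIn hx
  have hCp : IsPathConnected C :=
    (hCo.isConnected_iff_isPathConnected).1 (isConnected_connectedComponentIn_iff.2 hx)
  by_cases hz : ∃ z ∈ C, Q.eval z = 0
  · obtain ⟨z, hzC, hz0⟩ := hz
    exact ⟨z, by simp [hQ0, hz0], (hCp.joinedIn x hxC z hzC).mono hCs⟩
  exfalso
  push Not at hz
  have hCb : Bornology.IsBounded C := (lem_compact hQ r).isBounded.subset
    (fun z hz => show ‖Q.eval z‖ ≤ r from le_of_lt (hCs hz))
  have hr : 0 < r := lt_of_le_of_lt (norm_nonneg _) hx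
  have hfr : ∀ z ∈ frontier C, r ≤ ‖Q.eval z‖ := by
    intro z hzf
    by_contra hlt
    push Not at hlt
    rw [hCo.frontier_eq] at hzf
    have hzc := hzf.1
    apply hzf.2
    have hzU : z ∈ lem Q r := hlt
    have : IsPreconnected (insert z C) :=
      isPreconnected_connectedComponentIn.subset_closure (Set.subset_insert _ _)
        (Set.insert_subset hzc subset_closure)
    exact this.subset_connectedComponentIn (Set.mem_insert_of_mem _ hxC)
      (Set.insert_subset hzU hCs) (Set.mem_insert _ _)
  have hne : ∀ z ∈ closure C, Q.eval z ≠ 0 := by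
    intro z hzc
    rw [closure_eq_self_union_frontier] at hzc
    rcases hzc with h | h
    · exact hz z h
    · intro h0
      have := hfr z h
      rw [h0, norm_zero] at this
      linarith
  have hd : DiffContOnCl ℂ (fun z => (Q.eval z)⁻¹) C := by
    apply DifferentiableOn.diffContOnCl
    exact Q.differentiable.differentiableOn.inv hne
  have := Complex.norm_le_of_forall_mem_frontier_norm_le hCb hd (C := r⁻¹)
    (fun z hzf => by
      rw [norm_inv]
      exact inv_anti₀ hr (hfr z hzf)) (subset_closure hxC)
  rw [norm_inv] at this
  have h2 : ‖Q.eval x‖ < r := hx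
  have h3 : 0 < ‖Q.eval x‖ := norm_pos_iff.2 (hz x hxC)
  have := (inv_le_inv₀ h3 hr).1 this
  linarith

lemma lem_closure {Q : Polynomial ℂ} (hQ : 0 < Q.degree) {r : ℝ} (hr : 0 < r) {p : ℂ}
    (hp : ‖Q.eval p‖ ≤ r) : p ∈ closure (lem Q r) := by
  rcases lt_or_eq_of_le hp with h | h
  · exact subset_closure h
  by_contra hc
  have hn : (closure (lem Q r))ᶜ ∈ 𝓝 p := isClosed_closure.isOpen_compl.mem_nhds hc
  have hmin : IsLocalMin (norm ∘ fun z => Q.eval z) p := by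
    filter_upwards [hn] with z hz
    have : z ∉ lem Q r := fun h' => hz (subset_closure h')
    simp only [lem, Set.mem_ofPred_eq, not_lt] at this
    simpa [h] using this
  rcases Complex.eventually_eq_or_eq_zero_of_isLocalMin_norm
    (Eventually.of_forall fun z => Q.differentiable.differentiableAt) hmin with h1 | h1
  · have : Q = Polynomial.C (Q.eval p) := by
      apply Polynomial.eq_of_infinite_eval_eq
      apply (infinite_of_mem_nhds p h1).mono
      intro z hz
      simpa using hz
    rw [this] at hQ
    exact absurd hQ (not_lt.2 Polynomial.degree_C_le)
  · rw [h1, norm_zero] at h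
    linarith

lemma sep {Q : Polynomial ℂ} (hQ : 0 < Q.degree) {r : ℝ} {C₁ C₂ : Set ℂ} (h1 : IsClosed C₁)
    (h2 : IsClosed C₂) (hd : Disjoint C₁ C₂) (hu : {z | ‖Q.eval z‖ ≤ r} ⊆ C₁ ∪ C₂) {z z' : ℂ}
    (hz : z ∈ C₁) (hz' : z' ∈ C₂) : ∃ s > r, ¬ JoinedIn (lem Q s) z z' := by
  obtain ⟨O₁, O₂, ho1, ho2, hc1, hc2, hdO⟩ := normal_separation h1 h2 hd
  have hK : IsCompact ({w | ‖Q.eval w‖ ≤ r + 1} \ (O₁ ∪ O₂)) :=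
    (lem_compact hQ _).diff (ho1.union ho2)
  have : ∃ s > r, lem Q s ⊆ O₁ ∪ O₂ := by
    rcases Set.eq_empty_or_nonempty ({w | ‖Q.eval w‖ ≤ r + 1} \ (O₁ ∪ O₂)) with he | hne
    · refine ⟨r + 1, by linarith, fun w hw => ?_⟩
      by_contra hc
      have : w ∈ ({w | ‖Q.eval w‖ ≤ r + 1} \ (O₁ ∪ O₂)) := ⟨show ‖Q.eval w‖ ≤ r + 1 from le_of_lt hw, hc⟩
      rw [he] at this
      exact this
    · obtain ⟨p, hp, hm⟩ := hK.exists_isMinOn hne Q.continuous.norm.continuousOn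
      refine ⟨min (r + 1) ‖Q.eval p‖, ?_, fun w hw => ?_⟩
      · apply lt_min (by linarith)
        by_contra hc
        push Not at hc
        exact hp.2 ((hu hc).imp (fun h => hc1 h) (fun h => hc2 h))
      · by_contra hc
        have hw' : ‖Q.eval w‖ < min (r + 1) ‖Q.eval p‖ := hw
        have := hm ⟨show ‖Q.eval w‖ ≤ r + 1 from le_of_lt (lt_of_lt_of_le hw' (min_le_left _ _)), hc⟩
        exact absurd (lt_of_lt_of_le hw' (min_le_right _ _)) (not_lt.2 this)
  obtain ⟨s, hs, hsub⟩ := this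
  refine ⟨s, hs, ?_⟩
  rintro ⟨γ, hγ⟩
  have hpc : IsPreconnected (Set.range γ) := isPreconnected_range γ.continuous
  have hs' : Set.range γ ⊆ O₁ ∪ O₂ := by
    rintro _ ⟨t, rfl⟩
    exact hsub (hγ t)
  have := hpc.subset_left_of_subset_union ho1 ho2 hdO hs' ⟨z, ⟨0, by simp⟩, hc1 hz⟩
  have h5 : z' ∈ O₁ := this ⟨1, by simp⟩
  exact Set.disjoint_left.1 hdO h5 (hc2 hz')


lemma local_sectors {Q : Polynomial ℂ} (hQ : 0 < Q.degree) {r : ℝ} (hr : 0 < r) {p : ℂ}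
    (hp : ‖Q.eval p‖ = r) :
    ∃ B ∈ 𝓝 p, ∃ z : ℕ → Q.roots.toFinset, ∀ x ∈ B, x ∈ lem Q r →
      ∃ i ≤ Q.derivative.roots.count p, JoinedIn (lem Q r) x (z i) := by
  set q0 := Q.eval p with hq0
  have hq0n : q0 ≠ 0 := by rw [← norm_pos_iff, hp]; exact hr
  set F := Q - Polynomial.C q0 with hF
  have hFne : F ≠ 0 := by
    intro h
    rw [sub_eq_zero.1 h] at hQ
    exact absurd hQ (not_lt.2 Polynomial.degree_C_le)
  have hFr : F.IsRoot p := by simp [hF, hq0]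
  have hk : Q.derivative.roots.count p + 1 = F.rootMultiplicity p := by
    have h1 := Polynomial.derivative_rootMultiplicity_of_root hFr
    have h2 : Polynomial.derivative F = Polynomial.derivative Q := by simp [hF]
    rw [h2] at h1
    rw [Polynomial.count_roots, h1]
    have := (Polynomial.rootMultiplicity_pos hFne).2 hFr
    omega
  set n := F.rootMultiplicity p with hn
  have hn0 : n ≠ 0 := by omega
  obtain ⟨H, hH, hHd⟩ := F.exists_eq_pow_rootMultiplicity_mul_and_not_dvd hFne p
  have hHp : H.eval p ≠ 0 := fun h => hHd (Polynomial.dvd_iff_isRoot.2 h)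
  have hQe : ∀ z, Q.eval z = q0 + (z - p) ^ n * H.eval z := by
    intro z
    have := congrArg (Polynomial.eval z) hH
    simp [hF] at this
    rw [← this]; ring
  obtain ⟨α, hα⟩ := IsAlgClosed.exists_pow_nat_eq (-(H.eval p) / q0) (Nat.pos_of_ne_zero hn0)
  have hα0 : α ≠ 0 := by
    rintro rfl
    rw [zero_pow hn0] at hα
    have : -(H.eval p) / q0 ≠ 0 := div_ne_zero (neg_ne_zero.2 hHp) hq0n
    exact this hα.symm
  set ψ : ℂ → ℂ := fun z => (z - p) * (α * (H.eval z / H.eval p) ^ ((n : ℂ)⁻¹)) with hψ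
  have hψn : ∀ z, Q.eval z = q0 * (1 - ψ z ^ n) := by
    intro z
    simp only [hψ, mul_pow, hα, Complex.cpow_nat_inv_pow _ hn0, hQe]
    field_simp
    ring
  have hψp : ψ p = 0 := by simp [hψ]
  have hder : HasStrictDerivAt ψ α p := by
    have hu : AnalyticAt ℂ (fun z => α * (H.eval z / H.eval p) ^ ((n : ℂ)⁻¹)) p := by
      apply analyticAt_const.mul
      apply AnalyticAt.cpow
      · apply AnalyticAt.div
        · exact H.differentiable.analyticAt p
        · exact analyticAt_const
        · exact hHp
      · exact analyticAt_const
      · simp [hHp]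
    have hid : HasStrictDerivAt (fun z : ℂ => z - p) 1 p := (hasStrictDerivAt_id p).sub_const p
    have := hid.mul hu.hasStrictDerivAt
    have h2 : HasStrictDerivAt ψ _ p := this
    convert h2 using 1
    simp [hHp]
  set e := (hder.hasStrictFDerivAt_equiv hα0).toOpenPartialHomeomorph ψ with he
  have hecoe : ∀ z, e z = ψ z := fun z => rfl
  have hes : p ∈ e.source := HasStrictFDerivAt.mem_toOpenPartialHomeomorph_source _
  have het : (0 : ℂ) ∈ e.target := by
    have := e.map_source hes
    rwa [hecoe, hψp] at this
  obtain ⟨δ, hδ, hball⟩ := Metric.isOpen_iff.1 e.open_target 0 het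
  set Lw : Set ℂ := Metric.ball 0 (δ ^ n) ∩ Metric.ball 1 1 with hLw
  have hLc : Convex ℝ Lw := (convex_ball _ _).inter (convex_ball _ _)
  have hLne : Lw.Nonempty := by
    have hm : 0 < min (δ ^ n) 1 := lt_min (pow_pos hδ n) one_pos
    refine ⟨((min (δ ^ n) 1 / 2 : ℝ) : ℂ), ?_, ?_⟩
    · rw [mem_ball_zero_iff, Complex.norm_real, Real.norm_of_nonneg (by positivity)]
      have := min_le_left (δ ^ n) 1
      linarith
    · rw [Metric.mem_ball, Complex.dist_eq]
      rw [← Complex.ofReal_one, ← Complex.ofReal_sub, Complex.norm_real, Real.norm_eq_abs, abs_lt]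
      have := min_le_right (δ ^ n) 1
      constructor <;> linarith
  have hLre : ∀ w ∈ Lw, 0 < w.re := by
    intro w hw
    have h1 := hw.2
    rw [Metric.mem_ball, Complex.dist_eq] at h1
    have := Complex.abs_re_le_norm (w - 1)
    have h3 := (abs_lt.1 (lt_of_le_of_lt this h1)).1
    simp at h3
    linarith
  set η := Complex.exp (2 * Real.pi * Complex.I / n) with hη
  have hηp : IsPrimitiveRoot η n := Complex.isPrimitiveRoot_exp n hn0
  have hηn : ‖η‖ = 1 := hηp.norm'_eq_one hn0
  set b : ℕ → ℂ → ℂ := fun i w => η ^ i * w ^ ((n : ℂ)⁻¹) with hb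
  have hbn : ∀ i w, b i w ^ n = w := by
    intro i w
    simp only [hb, mul_pow, Complex.cpow_nat_inv_pow _ hn0]
    rw [← pow_mul, mul_comm i n, pow_mul, hηp.pow_eq_one, one_pow, one_mul]
  have hbt : ∀ i, ∀ w ∈ Lw, b i w ∈ e.target := by
    intro i w hw
    apply hball
    rw [mem_ball_zero_iff]
    have h1 := hw.1
    rw [mem_ball_zero_iff, ← hbn i w, norm_pow] at h1
    exact lt_of_pow_lt_pow_left₀ n hδ.le h1
  have hbc : ∀ i, ContinuousOn (b i) Lw := by
    intro i
    apply continuousOn_const.mul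
    intro w hw
    apply ContinuousAt.continuousWithinAt
    apply continuousAt_cpow_const
    left
    exact hLre w hw
  set S : ℕ → Set ℂ := fun i => (fun w => e.symm (b i w)) '' Lw with hS
  have hSp : ∀ i, IsPathConnected (S i) := by
    intro i
    apply (hLc.isPathConnected hLne).image'
    exact e.continuousOn_symm.comp (hbc i) (hbt i)
  have hSU : ∀ i, S i ⊆ lem Q r := by
    rintro i _ ⟨w, hw, rfl⟩
    show ‖Q.eval _‖ < r
    simp only
    rw [hψn, ← hecoe, e.right_inv (hbt i w hw), hbn, norm_mul, hp]
    have h1 := hw.2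
    rw [Metric.mem_ball, dist_comm, Complex.dist_eq] at h1
    nlinarith
  have hz : ∀ i, ∃ z : Q.roots.toFinset, ∀ x ∈ S i, JoinedIn (lem Q r) x z := by
    intro i
    obtain ⟨x0, hx0⟩ := (hSp i).nonempty
    obtain ⟨z, hz, hj⟩ := join_root hQ (hSU i hx0)
    exact ⟨⟨z, hz⟩, fun x hx => (((hSp i).joinedIn x hx x0 hx0).mono (hSU i)).trans hj⟩
  choose z hz using hz
  refine ⟨e.source ∩ ψ ⁻¹' Metric.ball 0 δ, ?_, z, ?_⟩
  · refine inter_mem (e.open_source.mem_nhds hes) ?_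
    apply hder.hasDerivAt.continuousAt.preimage_mem_nhds
    rw [hψp]
    exact Metric.ball_mem_nhds _ hδ
  · rintro x ⟨hxs, hxb⟩ hxU
    have hwL : ψ x ^ n ∈ Lw := by
      constructor
      · rw [mem_ball_zero_iff, norm_pow]
        have : ‖ψ x‖ < δ := mem_ball_zero_iff.1 hxb
        exact pow_lt_pow_left₀ this (norm_nonneg _) hn0
      · have h1 : ‖Q.eval x‖ < r := hxU
        rw [hψn, norm_mul, hp] at h1
        rw [Metric.mem_ball, dist_comm, Complex.dist_eq]
        by_contra hc
        push Not at hc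
        nlinarith
    have hw0 : ψ x ^ n ≠ 0 := by
      intro h
      have := hLre _ hwL
      rw [h] at this
      simp at this
    set ρ := (ψ x ^ n) ^ ((n : ℂ)⁻¹) with hρ
    have hρn : ρ ^ n = ψ x ^ n := Complex.cpow_nat_inv_pow _ hn0
    have hρ0 : ρ ≠ 0 := by
      intro h
      rw [h, zero_pow hn0] at hρn
      exact hw0 hρn.symm
    have : NeZero n := ⟨hn0⟩
    obtain ⟨i, hi, hiη⟩ := hηp.eq_pow_of_pow_eq_one (ξ := ψ x / ρ)
      (by rw [div_pow, hρn, div_self hw0])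
    refine ⟨i, by omega, hz i x ⟨ψ x ^ n, hwL, ?_⟩⟩
    have : b i (ψ x ^ n) = ψ x := by
      simp only [hb]
      rw [hiη, ← hρ, div_mul_cancel₀ _ hρ0]
    simp only [this]
    rw [← hecoe]
    exact e.left_inv hxs


noncomputable def NN (Q : Polynomial ℂ) (r : ℝ) : ℕ :=
  Module.finrank ℝ (Vsub Q.roots.toFinset (lem Q r))

open Classical in
noncomputable def bb (Q : Polynomial ℂ) (r : ℝ) : ℕ :=
  (Q.derivative.roots.filter (fun c => r ≤ ‖Q.eval c‖)).card

lemma Vsub_anti {Z : Finset ℂ} {U W : Set ℂ} (h : U ⊆ W) : Vsub Z W ≤ Vsub Z U :=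
  fun _ hv x y hj => hv x y (hj.mono h)

/-- uniform choice of a level from pairwise separation -/
lemma unif_sep {Q : Polynomial ℂ} {r : ℝ} {V : Submodule ℝ (Q.roots.toFinset → ℝ)}
    (h : ∀ x y : Q.roots.toFinset, (∃ v ∈ V, v x ≠ v y) → ∃ s > r, ¬ JoinedIn (lem Q s) (x : ℂ) y) :
    ∃ s > r, ∀ s' ≤ s, V ≤ Vsub Q.roots.toFinset (lem Q s') := by
  have h' : ∀ x y : Q.roots.toFinset, ∀ᶠ s in 𝓝[>] r,
      (∃ v ∈ V, v x ≠ v y) → ¬ JoinedIn (lem Q s) (x : ℂ) y := by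
    intro x y
    by_cases hv : ∃ v ∈ V, v x ≠ v y
    · obtain ⟨s, hs, hn⟩ := h x y hv
      filter_upwards [Ioo_mem_nhdsGT hs] with s' hs' _ hj
      exact hn (hj.mono (lem_mono Q hs'.2.le))
    · exact Eventually.of_forall fun s hh => absurd hh hv
  have h2 := eventually_all.2 fun x => eventually_all.2 (h' x)
  obtain ⟨s, hs, hsr⟩ := (h2.and self_mem_nhdsWithin).exists
  refine ⟨s, hsr, fun s' hs' v hv x y hj => ?_⟩
  by_contra hne
  exact hs x y ⟨v, hv, hne⟩ (hj.mono (lem_mono Q hs'))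

lemma right_step {Q : Polynomial ℂ} (hQ : 0 < Q.degree) {t : ℝ} (ht : 0 < t) :
    ∃ s > t, ∀ s', t < s' → s' ≤ s → NN Q t + bb Q s' ≤ NN Q s' + bb Q t := by
  classical
  have hsec : ∀ p : ℂ, ∃ z : ℕ → Q.roots.toFinset, ‖Q.eval p‖ = t → ∃ B ∈ 𝓝 p,
      ∀ x ∈ B, x ∈ lem Q t →
      ∃ i ≤ Q.derivative.roots.count p, JoinedIn (lem Q t) x (z i) := by
    intro p
    by_cases hp : ‖Q.eval p‖ = t
    · obtain ⟨B, hB, z, hz⟩ := local_sectors hQ ht hp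
      exact ⟨z, fun _ => ⟨B, hB, hz⟩⟩
    · obtain ⟨w, hw⟩ := Complex.exists_root hQ
      have hQ0 : Q ≠ 0 := by rintro rfl; simp at hQ
      exact ⟨fun _ => ⟨w, by simpa [hQ0] using hw⟩, fun h => absurd h hp⟩
  choose z hz using hsec
  set M := Q.derivative.roots.filter (fun c => ‖Q.eval c‖ = t) with hM
  set I := Σ p : M.toFinset, Fin (M.count (p : ℂ)) with hI
  have hIcard : Fintype.card I = M.card := by
    simp only [hI, Fintype.card_sigma, Fintype.card_fin]
    rw [← Multiset.toFinset_sum_count_eq M]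
    exact Finset.sum_coe_sort M.toFinset (fun p => M.count p)
  let L : (Q.roots.toFinset → ℝ) →ₗ[ℝ] (I → ℝ) :=
    LinearMap.pi fun i => (LinearMap.proj (R := ℝ) (φ := fun _ : Q.roots.toFinset => ℝ) (z i.1 (i.2 + 1))) -
      LinearMap.proj (R := ℝ) (φ := fun _ : Q.roots.toFinset => ℝ) (z i.1 0)
  have hLk : ∀ v, v ∈ LinearMap.ker L → ∀ p, ‖Q.eval p‖ = t →
      ∀ i ≤ Q.derivative.roots.count p, v (z p i) = v (z p 0) := by
    intro v hv p hp i hi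
    rcases Nat.eq_zero_or_pos i with rfl | hi0
    · rfl
    have hc : M.count p = Q.derivative.roots.count p := by
      rw [hM, Multiset.count_filter, if_pos hp]
    have hpM : p ∈ M.toFinset := by
      rw [Multiset.mem_toFinset, ← Multiset.count_pos]
      omega
    have := congrFun (LinearMap.mem_ker.1 hv) ⟨⟨p, hpM⟩, ⟨i - 1, by simp only; omega⟩⟩
    simp only [L, LinearMap.pi_apply, LinearMap.sub_apply, LinearMap.proj_apply, Pi.zero_apply] at this
    rw [Nat.sub_add_cancel hi0] at this
    linarith
  set V := Vsub Q.roots.toFinset (lem Q t) with hV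
  obtain ⟨s, hs, hs2⟩ := unif_sep (Q := Q) (r := t) (V := V ⊓ LinearMap.ker L) (by
    rintro x y ⟨v, ⟨hvV, hvK⟩, hne⟩
    set A : Set ℂ := {u | ∃ w : Q.roots.toFinset, JoinedIn (lem Q t) u w ∧ v w = v x} with hA
    set A' : Set ℂ := {u | ∃ w : Q.roots.toFinset, JoinedIn (lem Q t) u w ∧ v w ≠ v x} with hA'
    have hrt : ∀ w : Q.roots.toFinset, (w : ℂ) ∈ lem Q t := by
      intro w
      have := w.2
      rw [Multiset.mem_toFinset] at this
      have h0 := (Polynomial.mem_roots'.1 this).2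
      show ‖Q.eval _‖ < t
      rw [h0.eq_zero, norm_zero]
      exact ht
    have hAA : lem Q t ⊆ A ∪ A' := by
      intro u hu
      obtain ⟨w, hw, hj⟩ := join_root hQ hu
      by_cases h : v ⟨w, hw⟩ = v x
      · exact Or.inl ⟨⟨w, hw⟩, hj, h⟩
      · exact Or.inr ⟨⟨w, hw⟩, hj, h⟩
    have hAs : ∀ u ∈ A, u ∈ lem Q t := fun u ⟨w, hj, _⟩ => hj.source_mem
    have hAs' : ∀ u ∈ A', u ∈ lem Q t := fun u ⟨w, hj, _⟩ => hj.source_mem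
    refine sep hQ (C₁ := closure A) (C₂ := closure A') isClosed_closure isClosed_closure ?_ ?_
      (subset_closure ⟨x, JoinedIn.refl (hrt x), rfl⟩)
      (subset_closure ⟨y, JoinedIn.refl (hrt y), fun h => hne h.symm⟩)
    · rw [Set.disjoint_left]
      intro p hp hp'
      have hpt : ‖Q.eval p‖ ≤ t := by
        have hcl : IsClosed {u | ‖Q.eval u‖ ≤ t} :=
          isClosed_le Q.continuous.norm continuous_const
        exact closure_minimal (fun u hu => show ‖Q.eval u‖ ≤ t from le_of_lt (hAs u hu)) hcl hp
      rcases lt_or_eq_of_le hpt with hlt | heq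
      · obtain ⟨ε, hε, hball⟩ := Metric.isOpen_iff.1 (lem_open Q t) p hlt
        obtain ⟨u, hu, w, hj, hw⟩ := mem_closure_iff_nhds.1 hp _ (Metric.ball_mem_nhds p hε)
        obtain ⟨u', hu', w', hj', hw'⟩ := mem_closure_iff_nhds.1 hp' _ (Metric.ball_mem_nhds p hε)
        have hjj : JoinedIn (lem Q t) u u' :=
          (((convex_ball p ε).isPathConnected ⟨u, hu⟩).joinedIn u hu u' hu').mono hball
        exact hw' ((hvV w w' ((hj.symm.trans hjj).trans hj')).symm.trans hw)
      · obtain ⟨B, hB, hBz⟩ := hz p heq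
        obtain ⟨u, hu, w, hj, hw⟩ := mem_closure_iff_nhds.1 hp _ hB
        obtain ⟨u', hu', w', hj', hw'⟩ := mem_closure_iff_nhds.1 hp' _ hB
        obtain ⟨i, hi, hji⟩ := hBz u hu hj.source_mem
        obtain ⟨i', hi', hji'⟩ := hBz u' hu' hj'.source_mem
        have e1 := hvV _ _ (hj.symm.trans hji)
        have e2 := hvV _ _ (hj'.symm.trans hji')
        have e3 := hLk v hvK p heq i hi
        have e4 := hLk v hvK p heq i' hi'
        exact hw' (by rw [e2, e4, ← e3, ← e1, hw])
    · intro p hp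
      have := closure_mono hAA (lem_closure hQ ht hp)
      rwa [closure_union] at this)
  refine ⟨s, hs, fun s' hts' hs' => ?_⟩
  have hmono := Submodule.finrank_mono (hs2 s' hs')
  have h1 := Submodule.finrank_sup_add_finrank_inf_eq V (LinearMap.ker L)
  have h2 := LinearMap.finrank_range_add_finrank_ker L
  have h3 := Submodule.finrank_le (V ⊔ LinearMap.ker L)
  have h4 := Submodule.finrank_le (LinearMap.range L)
  rw [Module.finrank_fintype_fun_eq_card ℝ (η := I), hIcard] at h4
  have hb : bb Q s' + M.card ≤ bb Q t := by
    unfold bb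
    rw [hM, ← Multiset.card_add]
    apply Multiset.card_le_card
    rw [Multiset.le_iff_count]
    intro c
    rw [Multiset.count_add, Multiset.count_filter, Multiset.count_filter, Multiset.count_filter]
    split_ifs <;> first | omega | (exfalso; linarith)
  have e1 : NN Q t = Module.finrank ℝ V := rfl
  have e2 : NN Q s' = Module.finrank ℝ (Vsub Q.roots.toFinset (lem Q s')) := rfl
  omega

lemma left_step {Q : Polynomial ℂ} {t : ℝ} :
    ∀ᶠ s in 𝓝[<] t, NN Q s = NN Q t ∧ bb Q s = bb Q t := by
  classical
  have h1 : ∀ x y : Q.roots.toFinset, ∀ᶠ s in 𝓝[<] t,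
      JoinedIn (lem Q t) (x : ℂ) y → JoinedIn (lem Q s) (x : ℂ) y := by
    intro x y
    by_cases hj : JoinedIn (lem Q t) (x : ℂ) y
    · obtain ⟨p, hp, hj'⟩ := joined_lt Q.continuous.norm hj
      have hp' : ‖Q.eval p‖ < t := hp
      filter_upwards [Ioo_mem_nhdsLT hp'] with s hs _
      exact hj'.mono (fun u hu => lt_of_le_of_lt (show ‖Q.eval u‖ ≤ ‖Q.eval p‖ from hu) hs.1)
    · exact Eventually.of_forall fun s h => absurd h hj
  have h1' := eventually_all.2 fun x => eventually_all.2 (h1 x)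
  have h2 : ∀ c ∈ Q.derivative.roots.toFinset, ∀ᶠ s in 𝓝[<] t,
      (s ≤ ‖Q.eval c‖ ↔ t ≤ ‖Q.eval c‖) := by
    intro c _
    by_cases h : t ≤ ‖Q.eval c‖
    · filter_upwards [self_mem_nhdsWithin] with s hs
      have : s < t := hs
      exact ⟨fun _ => h, fun _ => by linarith⟩
    · push Not at h
      filter_upwards [Ioo_mem_nhdsLT h] with s hs
      constructor <;> intro h' <;> linarith [hs.1]
  have h2' := (Finset.eventually_all _).2 h2
  filter_upwards [h1', h2', self_mem_nhdsWithin] with s hs1 hs2 hs3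
  constructor
  · unfold NN
    have : Vsub Q.roots.toFinset (lem Q s) = Vsub Q.roots.toFinset (lem Q t) := by
      apply le_antisymm
      · intro v hv x y hj
        exact hv x y (hs1 x y hj)
      · exact Vsub_anti (lem_mono Q (le_of_lt hs3))
    rw [this]
  · unfold bb
    congr 1
    apply Multiset.filter_congr
    intro c hc
    exact hs2 c (Multiset.mem_toFinset.2 hc)

lemma mono_step {Q : Polynomial ℂ} (hQ : 0 < Q.degree) {r r' : ℝ} (hr : 0 < r) (h : r ≤ r') :
    NN Q r + bb Q r' ≤ NN Q r' + bb Q r := by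
  by_contra hcon
  set T := {t | r ≤ t ∧ ¬ (NN Q r + bb Q t ≤ NN Q t + bb Q r)} with hT
  have hTne : T.Nonempty := ⟨r', h, hcon⟩
  have hTb : BddBelow T := ⟨r, fun t ht => ht.1⟩
  set t := sInf T with htd
  have hrt : r ≤ t := le_csInf hTne fun t ht => ht.1
  have hbelow : ∀ s, r ≤ s → s < t → NN Q r + bb Q s ≤ NN Q s + bb Q r := by
    intro s hs hst
    by_contra hc
    exact absurd (csInf_le hTb (show s ∈ T from ⟨hs, hc⟩)) (not_le.2 hst)
  have hP : NN Q r + bb Q t ≤ NN Q t + bb Q r := by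
    rcases eq_or_lt_of_le hrt with he | hlt
    · rw [← he]
    · obtain ⟨s, ⟨h1, h2⟩, h3⟩ := (left_step (Q := Q) (t := t) |>.and (Ioo_mem_nhdsLT hlt)).exists
      have := hbelow s h3.1.le h3.2
      omega
  obtain ⟨s, hs, hstep⟩ := right_step hQ (lt_of_lt_of_le hr hrt)
  obtain ⟨u, huT, hus⟩ := exists_lt_of_csInf_lt hTne hs
  have htu : t ≤ u := csInf_le hTb huT
  rcases eq_or_lt_of_le htu with he | hlt
  · exact huT.2 (by rw [← he]; exact hP)
  · have := hstep u hlt hus.le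
    exact huT.2 (by omega)

lemma small_case {Q : Polynomial ℂ} (hQ : 0 < Q.degree) {R : ℝ} (hR : 0 < R) :
    ∃ s, 0 < s ∧ s ≤ R ∧ 1 + bb Q s ≤ NN Q s := by
  classical
  have hQ0 : Q ≠ 0 := by rintro rfl; simp at hQ
  obtain ⟨s, hs, hsV⟩ := unif_sep (Q := Q) (r := 0) (V := ⊤) (by
    rintro x y ⟨v, _, hne⟩
    have hxy : (x : ℂ) ≠ y := fun h => hne (by rw [Subtype.ext h])
    refine sep hQ (C₁ := {(x : ℂ)}) (C₂ := (Q.roots.toFinset.erase x : Finset ℂ))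
      isClosed_singleton (Finset.finite_toSet _).isClosed ?_ ?_ rfl ?_
    · simp
    · intro p hp
      have hp' : ‖Q.eval p‖ ≤ 0 := hp
      have h0 : Q.eval p = 0 := norm_le_zero_iff.1 hp'
      by_cases hpx : p = x
      · left; exact hpx
      · right
        simp [hpx, hQ0, h0]
    · have := y.2
      rw [Finset.mem_coe, Finset.mem_erase]
      exact ⟨hxy.symm, this⟩)
  refine ⟨min s R, lt_min hs hR, min_le_right _ _, ?_⟩
  have h1 : NN Q (min s R) = Q.roots.toFinset.card := by
    unfold NN
    rw [top_le_iff.1 (hsV _ (min_le_left _ _)), finrank_top, Module.finrank_fintype_fun_eq_card]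
    simp
  rw [h1]
  have hpos : 0 < min s R := lt_min hs hR
  have hcard : Q.derivative.roots.card + 1 = Q.roots.card := by
    rw [IsAlgClosed.card_roots_eq_natDegree, IsAlgClosed.card_roots_eq_natDegree,
      Polynomial.natDegree_derivative]
    have := Polynomial.natDegree_pos_iff_degree_pos.2 hQ
    omega
  have hsum : ∑ z ∈ Q.roots.toFinset, (Q.derivative.roots.count z + 1) = Q.roots.card := by
    rw [← Multiset.toFinset_sum_count_eq]
    apply Finset.sum_congr rfl
    intro z hz
    have hz' := Multiset.mem_toFinset.1 hz
    have := Polynomial.derivative_rootMultiplicity_of_root (Polynomial.mem_roots'.1 hz').2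
    rw [Polynomial.count_roots, Polynomial.count_roots, this]
    have := (Polynomial.rootMultiplicity_pos hQ0).2 (Polynomial.mem_roots'.1 hz').2
    omega
  rw [Finset.sum_add_distrib, Finset.sum_const, smul_eq_mul, mul_one] at hsum
  have hfil : ∑ z ∈ Q.roots.toFinset, Q.derivative.roots.count z
      ≤ (Q.derivative.roots.filter (fun c => ¬ (min s R ≤ ‖Q.eval c‖))).card := by
    have : ∑ z ∈ Q.roots.toFinset, Q.derivative.roots.count z = ∑ z ∈ Q.roots.toFinset,
        (Q.derivative.roots.filter (fun c => ¬ (min s R ≤ ‖Q.eval c‖))).count z := by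
      apply Finset.sum_congr rfl
      intro z hz
      rw [Multiset.count_filter_of_pos]
      have hz' := (Polynomial.mem_roots'.1 (Multiset.mem_toFinset.1 hz)).2
      rw [hz'.eq_zero, norm_zero]
      exact not_le.2 hpos
    rw [this]
    set X := Q.derivative.roots.filter (fun c => ¬ (min s R ≤ ‖Q.eval c‖))
    calc ∑ z ∈ Q.roots.toFinset, X.count z ≤ ∑ z ∈ Q.roots.toFinset ∪ X.toFinset, X.count z :=
          Finset.sum_le_sum_of_subset Finset.subset_union_left
      _ = X.card := Multiset.sum_count_eq_card (fun a ha =>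
          Finset.mem_union_right _ (Multiset.mem_toFinset.2 ha))
  have hsplit := congrArg Multiset.card
    (Multiset.filter_add_not (fun c => min s R ≤ ‖Q.eval c‖) Q.derivative.roots)
  rw [Multiset.card_add] at hsplit
  unfold bb
  omega

lemma large_case {Q : Polynomial ℂ} (hQ : 0 < Q.degree) (R : ℝ) :
    ∃ s, R ≤ s ∧ NN Q s ≤ 1 := by
  classical
  have h1 : ∀ x y : Q.roots.toFinset, ∀ᶠ s in atTop, JoinedIn (lem Q s) (x : ℂ) y := by
    intro x y
    have : JoinedIn Set.univ (x : ℂ) y := joinedIn_univ.2 (PathConnectedSpace.joined _ _)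
    obtain ⟨p, _, hj⟩ := joined_lt Q.continuous.norm this
    filter_upwards [eventually_gt_atTop ‖Q.eval p‖] with s hs
    exact hj.mono (fun u hu => lt_of_le_of_lt (show ‖Q.eval u‖ ≤ ‖Q.eval p‖ from hu) hs)
  have h1' := eventually_all.2 fun x => eventually_all.2 (h1 x)
  obtain ⟨s, hs, hsR⟩ := (h1'.and (eventually_ge_atTop R)).exists
  refine ⟨s, hsR, ?_⟩
  obtain ⟨w, hw⟩ := Complex.exists_root hQ
  have hQ0 : Q ≠ 0 := by rintro rfl; simp at hQ
  let w' : Q.roots.toFinset := ⟨w, by simpa [hQ0] using hw⟩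
  unfold NN
  have := LinearMap.finrank_le_finrank_of_injective
    (f := (LinearMap.proj (R := ℝ) (φ := fun _ : Q.roots.toFinset => ℝ) w').domRestrict
      (Vsub Q.roots.toFinset (lem Q s))) (by
    intro v v' h
    ext x
    have e1 := v.2 x w' (hs x w')
    have e2 := v'.2 x w' (hs x w')
    have h' : (v : Q.roots.toFinset → ℝ) w' = (v' : Q.roots.toFinset → ℝ) w' := h
    rw [e1, e2, h'])
  simpa using this

theorem lemniscate_count {Q : Polynomial ℂ} (hQ : 0 < Q.degree) {R : ℝ} (hR : 0 < R) :
    NN Q R = 1 + bb Q R := by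
  obtain ⟨s, hs, hsR, h1⟩ := small_case hQ hR
  obtain ⟨S, hS, h2⟩ := large_case hQ R
  have h3 := mono_step hQ hs hsR
  have h4 := mono_step hQ hR hS
  omega


lemma poly_upper (S : Polynomial ℂ) {k : ℕ} (hk : S.natDegree ≤ k) :
    ∃ B : ℝ, 0 ≤ B ∧ ∀ z : ℂ, ‖S.eval z‖ ≤ B * (max 1 ‖z‖) ^ k := by
  refine ⟨∑ i ∈ Finset.range (S.natDegree + 1), ‖S.coeff i‖, by positivity, fun z => ?_⟩
  rw [Polynomial.eval_eq_sum_range, Finset.sum_mul]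
  refine (norm_sum_le _ _).trans (Finset.sum_le_sum fun i hi => ?_)
  rw [norm_mul, norm_pow]
  apply mul_le_mul_of_nonneg_left _ (norm_nonneg _)
  have hi' : i ≤ k := by
    have := Finset.mem_range.1 hi
    omega
  calc ‖z‖ ^ i ≤ (max 1 ‖z‖) ^ i := pow_le_pow_left₀ (norm_nonneg _) (le_max_right _ _) _
    _ ≤ (max 1 ‖z‖) ^ k := pow_le_pow_right₀ (le_max_left _ _) hi'

lemma poly_lower (P : Polynomial ℂ) (hd : 0 < P.natDegree) :
    ∃ ε : ℝ, 0 < ε ∧ ∀ z : ℂ, ε * (max 1 ‖z‖) ^ P.natDegree ≤ max 1 ‖P.eval z‖ := by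
  set d := P.natDegree with hdd
  have hP0 : P ≠ 0 := by rintro rfl; simp [hdd] at hd
  obtain ⟨B, hB, hBz⟩ := poly_upper P.eraseLead (k := d - 1) P.eraseLead_natDegree_le
  set l := ‖P.leadingCoeff‖ with hl
  have hl0 : 0 < l := norm_pos_iff.2 (by simpa using hP0)
  set ρ := max 1 (2 * B / l) with hρ
  have hρ1 : 1 ≤ ρ := le_max_left _ _
  have hρ0 : 0 < ρ := by linarith
  refine ⟨min (l / 2) ((ρ ^ d)⁻¹), lt_min (by positivity) (by positivity), fun z => ?_⟩
  rcases le_total ‖z‖ ρ with h | h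
  · refine le_trans ?_ (le_max_left _ _)
    calc min (l / 2) ((ρ ^ d)⁻¹) * (max 1 ‖z‖) ^ d ≤ (ρ ^ d)⁻¹ * ρ ^ d := by
          gcongr
          · exact min_le_right _ _
          · exact max_le hρ1 h
      _ = 1 := inv_mul_cancel₀ (by positivity)
  · refine le_trans ?_ (le_max_right _ _)
    have hz1 : 1 ≤ ‖z‖ := hρ1.trans h
    have hzm : max 1 ‖z‖ = ‖z‖ := max_eq_right hz1
    have hBz' := hBz z
    rw [hzm] at hBz' ⊢
    have hev : P.eval z = P.eraseLead.eval z + P.leadingCoeff * z ^ d := by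
      have := congrArg (Polynomial.eval z) P.eraseLead_add_C_mul_X_pow
      rw [Polynomial.eval_add, Polynomial.eval_mul, Polynomial.eval_C, Polynomial.eval_pow,
        Polynomial.eval_X] at this
      exact this.symm
    have h1 : l * ‖z‖ ^ d - B * ‖z‖ ^ (d - 1) ≤ ‖P.eval z‖ := by
      have := norm_sub_le_norm_add (P.leadingCoeff * z ^ d) (P.eraseLead.eval z)
      rw [norm_mul, norm_pow, add_comm, ← hev] at this
      linarith
    have h2 : 2 * B ≤ l * ‖z‖ := by
      have : 2 * B / l ≤ ‖z‖ := (le_max_right _ _).trans h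
      rw [div_le_iff₀ hl0] at this
      linarith
    have h3 : ‖z‖ ^ d = ‖z‖ * ‖z‖ ^ (d - 1) := by
      rw [← pow_succ', Nat.sub_add_cancel hd]
    have h4 : 0 < ‖z‖ ^ (d - 1) := by positivity
    calc min (l / 2) ((ρ ^ d)⁻¹) * ‖z‖ ^ d ≤ l / 2 * ‖z‖ ^ d := by
          gcongr
          exact min_le_left _ _
      _ ≤ l * ‖z‖ ^ d - B * ‖z‖ ^ (d - 1) := by
          rw [h3]; nlinarith
      _ ≤ _ := h1

lemma log_bound (P : Polynomial ℂ) (hd : 0 < P.natDegree) :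
    ∃ C : ℝ, 0 ≤ C ∧ ∀ z : ℂ,
      |Real.log (max 1 ‖P.eval z‖) - P.natDegree * Real.log (max 1 ‖z‖)| ≤ C := by
  obtain ⟨ε, hε, hlo⟩ := poly_lower P hd
  obtain ⟨B, hB, hup⟩ := poly_upper P le_rfl
  refine ⟨max |Real.log ε| (Real.log (max 1 B)), by positivity, fun z => ?_⟩
  have hm : 0 < max 1 ‖z‖ := by positivity
  have hm1 : 1 ≤ max 1 ‖z‖ := le_max_left _ _
  have hM : 0 < max 1 ‖P.eval z‖ := by positivity
  have h1 : Real.log ε + P.natDegree * Real.log (max 1 ‖z‖) ≤ Real.log (max 1 ‖P.eval z‖) := by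
    rw [← Real.log_pow, ← Real.log_mul hε.ne' (by positivity)]
    exact Real.log_le_log (by positivity) (hlo z)
  have h2 : Real.log (max 1 ‖P.eval z‖) ≤
      Real.log (max 1 B) + P.natDegree * Real.log (max 1 ‖z‖) := by
    rw [← Real.log_pow, ← Real.log_mul (by positivity) (by positivity)]
    apply Real.log_le_log hM
    apply max_le
    · exact one_le_mul_of_one_le_of_one_le (le_max_left _ _) (one_le_pow₀ hm1)
    · refine (hup z).trans ?_
      gcongr
      exact le_max_right _ _
  rw [abs_le]
  constructor
  · have := neg_abs_le (Real.log ε)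
    have := le_max_left |Real.log ε| (Real.log (max 1 B))
    linarith
  · have := le_max_right |Real.log ε| (Real.log (max 1 B))
    linarith

noncomputable def uu (P : Polynomial ℂ) (n : ℕ) (z : ℂ) : ℝ :=
  Real.log (max 1 ‖(fun w => P.eval w)^[n] z‖) / (P.natDegree : ℝ) ^ n

noncomputable def gg (P : Polynomial ℂ) (z : ℂ) : ℝ := limUnder atTop (fun n => uu P n z)

lemma gg_approx (P : Polynomial ℂ) (hd : 2 ≤ P.natDegree) :
    ∃ K : ℝ, 0 ≤ K ∧ ∀ z, Tendsto (fun n => uu P n z) atTop (𝓝 (gg P z)) ∧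
      ∀ n, |uu P n z - gg P z| ≤ K / (P.natDegree : ℝ) ^ n := by
  obtain ⟨C, hC, hb⟩ := log_bound P (by omega)
  have hd' : (2 : ℝ) ≤ P.natDegree := by exact_mod_cast hd
  set D : ℝ := (P.natDegree : ℝ) with hD
  have hr : (1 / D) < 1 := by
    rw [div_lt_one (by linarith)]; linarith
  have hr2 : (1 / D) ≤ 1 / 2 := one_div_le_one_div_of_le (by norm_num) hd'
  have hstep : ∀ z n, dist (uu P n z) (uu P (n + 1) z) ≤ C * (1 / D) ^ n := by
    intro z n
    rw [dist_comm, Real.dist_eq]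
    have h1 := hb ((fun w => P.eval w)^[n] z)
    have h2 : uu P (n + 1) z - uu P n z =
        (Real.log (max 1 ‖P.eval ((fun w => P.eval w)^[n] z)‖) -
          D * Real.log (max 1 ‖(fun w => P.eval w)^[n] z‖)) / D ^ (n + 1) := by
      simp only [uu, Function.iterate_succ_apply']
      have : D ≠ 0 := by linarith
      rw [← hD]
      field_simp
      ring
    rw [h2, abs_div, abs_of_pos (show 0 < D ^ (n + 1) by positivity)]
    have h3 : D ^ n ≤ D ^ (n + 1) := pow_le_pow_right₀ (by linarith) (by omega)
    calc _ ≤ C / D ^ n := by gcongr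
      _ = _ := by rw [one_div, inv_pow, div_eq_mul_inv]
  refine ⟨2 * C, by positivity, fun z => ?_⟩
  have ht : Tendsto (fun n => uu P n z) atTop (𝓝 (gg P z)) :=
    tendsto_nhds_limUnder (cauchySeq_tendsto_of_complete
      (cauchySeq_of_le_geometric (1 / D) C hr (hstep z)))
  refine ⟨ht, fun n => ?_⟩
  have := dist_le_of_le_geometric_of_tendsto (1 / D) C hr (hstep z) ht n
  rw [Real.dist_eq] at this
  refine this.trans ?_
  have h0 : 0 ≤ C * (1 / D) ^ n := by positivity
  rw [div_le_iff₀ (by linarith)]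
  have : 2 * C / D ^ n = 2 * (C * (1 / D) ^ n) := by
    rw [one_div, inv_pow, div_eq_mul_inv]; ring
  rw [this]
  nlinarith

lemma gg_cont (P : Polynomial ℂ) (hd : 2 ≤ P.natDegree) : Continuous (gg P) := by
  obtain ⟨K, hK, h⟩ := gg_approx P hd
  have hd' : (2 : ℝ) ≤ P.natDegree := by exact_mod_cast hd
  have hu : TendstoUniformly (fun n z => uu P n z) (gg P) atTop := by
    rw [Metric.tendstoUniformly_iff]
    intro ε hε
    have ht : Tendsto (fun n => K / (P.natDegree : ℝ) ^ n) atTop (𝓝 0) :=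
      tendsto_const_nhds.div_atTop (tendsto_pow_atTop_atTop_of_one_lt (by linarith))
    filter_upwards [ht.eventually (gt_mem_nhds hε)] with n hn z
    rw [dist_comm, Real.dist_eq]
    exact ((h z).2 n).trans_lt hn
  refine hu.continuous (Eventually.of_forall fun n => ?_).frequently
  unfold uu
  have hc : Continuous (fun z => (fun w => P.eval w)^[n] z) := P.continuous.iterate n
  apply Continuous.div_const
  exact (continuous_const.max hc.norm).log fun z => by positivity

lemma gg_nonneg (P : Polynomial ℂ) (hd : 2 ≤ P.natDegree) (z : ℂ) : 0 ≤ gg P z := by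
  obtain ⟨K, hK, h⟩ := gg_approx P hd
  refine ge_of_tendsto' (h z).1 fun n => ?_
  exact div_nonneg (Real.log_nonneg (le_max_left _ _)) (by positivity)

lemma gg_fun (P : Polynomial ℂ) (hd : 2 ≤ P.natDegree) (z : ℂ) :
    gg P (P.eval z) = P.natDegree * gg P z := by
  obtain ⟨K, hK, h⟩ := gg_approx P hd
  have h1 := (h (P.eval z)).1
  have h2 := ((h z).1.comp (tendsto_add_atTop_nat 1)).const_mul (P.natDegree : ℝ)
  refine tendsto_nhds_unique h1 (h2.congr fun n => ?_)
  simp only [Function.comp, uu, Function.iterate_succ_apply]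
  have : (P.natDegree : ℝ) ≠ 0 := by
    have : P.natDegree ≠ 0 := by omega
    exact_mod_cast this
  field_simp
  ring

lemma gg_iter (P : Polynomial ℂ) (hd : 2 ≤ P.natDegree) (n : ℕ) (z : ℂ) :
    gg P ((fun w => P.eval w)^[n] z) = (P.natDegree : ℝ) ^ n * gg P z := by
  induction n with
  | zero => simp
  | succ n ih => rw [Function.iterate_succ_apply', gg_fun P hd, ih]; ring

lemma sandwich (P : Polynomial ℂ) (hd : 2 ≤ P.natDegree) (w : ℂ) {η η' : ℝ} (h0 : 0 ≤ η)
    (h : η < η') : ∃ n ≥ 1, ∃ R > 0,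
      (∀ z, gg P z ≤ η → ‖(fun w => P.eval w)^[n] z - w‖ < R) ∧
      (∀ z, ‖(fun w => P.eval w)^[n] z - w‖ < R → gg P z ≤ η') := by
  obtain ⟨K, hK, hap⟩ := gg_approx P hd
  have hd' : (2 : ℝ) ≤ P.natDegree := by exact_mod_cast hd
  set W := Real.log (1 + ‖w‖) with hW
  have hW0 : 0 ≤ W := Real.log_nonneg (by linarith [norm_nonneg w])
  have hWe : Real.exp W = 1 + ‖w‖ := Real.exp_log (by positivity)
  have ht := tendsto_pow_atTop_atTop_of_one_lt (show 1 < (P.natDegree : ℝ) by linarith)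
  obtain ⟨n, hn, hn1⟩ := ((ht.eventually (eventually_gt_atTop ((K + W) / ((η' - η) / 2)))).and
    (eventually_ge_atTop 1)).exists
  rw [div_lt_iff₀ (by linarith)] at hn
  set T : ℝ := (P.natDegree : ℝ) ^ n with hT
  have hT0 : 0 < T := by positivity
  set m := (η + η') / 2 with hm
  have hm0 : 0 ≤ T * m := mul_nonneg hT0.le (by linarith)
  refine ⟨n, hn1, Real.exp (T * m), Real.exp_pos _, fun z hz => ?_, fun z hz => ?_⟩
  · have h1 := (abs_le.1 ((hap z).2 n)).2
    have h2 : Real.log (max 1 ‖(fun w => P.eval w)^[n] z‖) ≤ T * η + K := by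
      have : uu P n z ≤ η + K / T := by linarith
      rw [uu, ← hT, div_le_iff₀ hT0] at this
      have e : (η + K / T) * T = T * η + K := by field_simp
      linarith
    have h3 := (Real.log_le_iff_le_exp (by positivity)).1 h2
    have h4 := (le_max_right _ _).trans h3
    have h5 : 1 ≤ Real.exp (T * η + K) := Real.one_le_exp (by positivity)
    calc _ ≤ ‖(fun w => P.eval w)^[n] z‖ + ‖w‖ := norm_sub_le _ _
      _ ≤ Real.exp (T * η + K) * (1 + ‖w‖) := by nlinarith [norm_nonneg w]
      _ = Real.exp (T * η + K + W) := by rw [Real.exp_add _ W, hWe]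
      _ < _ := by
        apply Real.exp_lt_exp.2
        rw [hm]
        linarith
  · have h1 := (abs_le.1 ((hap z).2 n)).1
    have h5 : 1 ≤ Real.exp (T * m) := Real.one_le_exp hm0
    have h2 : ‖(fun w => P.eval w)^[n] z‖ ≤ Real.exp (T * m + W) := by
      rw [Real.exp_add, hWe]
      have := norm_sub_norm_le ((fun w => P.eval w)^[n] z) w
      nlinarith [norm_nonneg w]
    have h3 : Real.log (max 1 ‖(fun w => P.eval w)^[n] z‖) ≤ T * m + W := by
      rw [Real.log_le_iff_le_exp (by positivity)]
      exact max_le (Real.one_le_exp (by linarith)) h2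
    have h4 : uu P n z ≤ (T * m + W) / T := by
      rw [uu, ← hT]
      gcongr
    have h6 : gg P z ≤ (T * m + W) / T + K / T := by linarith
    refine h6.trans ?_
    rw [← add_div, div_le_iff₀ hT0]
    rw [hm]
    linarith


noncomputable def PP (P : Polynomial ℂ) : ℕ → Polynomial ℂ
  | 0 => Polynomial.X
  | n + 1 => P.comp (PP P n)

lemma PP_eval (P : Polynomial ℂ) (n : ℕ) (z : ℂ) :
    (PP P n).eval z = (fun w => P.eval w)^[n] z := by
  induction n with
  | zero => simp [PP]
  | succ n ih => rw [PP, Polynomial.eval_comp, ih, Function.iterate_succ_apply']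

lemma PP_deg (P : Polynomial ℂ) (n : ℕ) : (PP P n).natDegree = P.natDegree ^ n := by
  induction n with
  | zero => simp [PP]
  | succ n ih => rw [PP, Polynomial.natDegree_comp, ih]; ring

lemma QQ_deg (P : Polynomial ℂ) (hd : 2 ≤ P.natDegree) (n : ℕ) (w : ℂ) :
    0 < (PP P n - Polynomial.C w).degree := by
  rw [← Polynomial.natDegree_pos_iff_degree_pos, Polynomial.natDegree_sub_C, PP_deg]
  positivity

lemma PP_der_ne (P : Polynomial ℂ) (hd : 2 ≤ P.natDegree) (n : ℕ) :
    (PP P n).derivative ≠ 0 := by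
  intro h
  have := Polynomial.natDegree_eq_zero_of_derivative_eq_zero h
  rw [PP_deg] at this
  have h2 : 0 < P.natDegree ^ n := by positivity
  omega

open Classical in
lemma PP_crit (P : Polynomial ℂ) (hd : 2 ≤ P.natDegree) {G γ : ℝ} (hG : 0 < G)
    (hγ : G / 2 ≤ γ) (hγG : γ < G)
    (hle : ∀ c ∈ P.derivative.roots, gg P c ≤ G)
    (hlt : ∀ c ∈ P.derivative.roots, gg P c < G → gg P c ≤ γ) (n : ℕ) :
    (∀ c ∈ (PP P (n + 1)).derivative.roots, G ≤ gg P c ∨ gg P c ≤ γ) ∧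
    ((PP P (n + 1)).derivative.roots.filter (fun c => G ≤ gg P c)).card =
      (P.derivative.roots.filter (fun c => G ≤ gg P c)).card := by
  induction n with
  | zero =>
    have : PP P (0 + 1) = P := by simp [PP]
    rw [this]
    refine ⟨fun c hc => ?_, rfl⟩
    rcases le_or_gt G (gg P c) with h | h
    · exact Or.inl h
    · exact Or.inr (hlt c hc h)
  | succ n ih =>
    have hder : (PP P (n + 1 + 1)).derivative =
        (PP P (n + 1)).derivative * P.derivative.comp (PP P (n + 1)) := by
      rw [PP, Polynomial.derivative_comp]
    have hne := PP_der_ne P hd (n + 1 + 1)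
    rw [hder] at hne
    have hnew : ∀ c ∈ (P.derivative.comp (PP P (n + 1))).roots, gg P c ≤ γ := by
      intro c hc
      have hc' := (Polynomial.mem_roots'.1 hc).2
      have hP' : P.derivative ≠ 0 := by
        have := PP_der_ne P hd 1
        simpa [PP] using this
      rw [Polynomial.IsRoot, Polynomial.eval_comp] at hc'
      have h1 := hle _ (Polynomial.mem_roots'.2 ⟨hP', hc'⟩)
      rw [PP_eval, gg_iter P hd] at h1
      have hd' : (2 : ℝ) ≤ P.natDegree := by exact_mod_cast hd
      have h2 : (2 : ℝ) ≤ (P.natDegree : ℝ) ^ (n + 1) :=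
        hd'.trans (le_self_pow₀ (by linarith) (by omega))
      have h3 := gg_nonneg P hd c
      nlinarith
    rw [hder, Polynomial.roots_mul hne]
    constructor
    · intro c hc
      rcases Multiset.mem_add.1 hc with h | h
      · exact ih.1 c h
      · exact Or.inr (hnew c h)
    · rw [Multiset.filter_add, Multiset.card_add, ih.2]
      have : (P.derivative.comp (PP P (n + 1))).roots.filter (fun c => G ≤ gg P c) = 0 := by
        rw [Multiset.filter_eq_nil]
        intro c hc h
        have := hnew c hc
        linarith
      rw [this]
      simp

open Classical in
theorem abstract_main (P : Polynomial ℂ) (hd : 2 ≤ P.natDegree) {G : ℝ} (hG : 0 < G)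
    (hle : ∀ c ∈ P.derivative.roots, gg P c ≤ G) :
    Nat.card (ConnectedComponents {z : ℂ | gg P z < G}) =
      1 + (P.derivative.roots.filter (fun c => G ≤ gg P c)).card := by
  -- the gap below `G`
  obtain ⟨γ, hγ, hγG, hlt⟩ : ∃ γ, G / 2 ≤ γ ∧ γ < G ∧
      ∀ c ∈ P.derivative.roots, gg P c < G → gg P c ≤ γ := by
    have h1 : ∀ c ∈ P.derivative.roots.toFinset, ∀ᶠ γ in 𝓝[<] G, gg P c < G → gg P c ≤ γ := by
      intro c _
      by_cases h : gg P c < G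
      · filter_upwards [Ioo_mem_nhdsLT h] with γ hγ _ using hγ.1.le
      · exact Eventually.of_forall fun _ h' => absurd h' h
    obtain ⟨γ, h2, h3⟩ := (((Finset.eventually_all _).2 h1).and
      (Ioo_mem_nhdsLT (show G / 2 < G by linarith))).exists
    exact ⟨γ, h3.1.le, h3.2, fun c hc => h2 c (Multiset.mem_toFinset.2 hc)⟩
  have hγ0 : 0 ≤ γ := by linarith
  -- a fixed point
  obtain ⟨w, hw⟩ : ∃ w, P.eval w = w := by
    have hdeg : 0 < (P - Polynomial.X).degree := by
      rw [← Polynomial.natDegree_pos_iff_degree_pos,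
        Polynomial.natDegree_sub_eq_left_of_natDegree_lt (by rw [Polynomial.natDegree_X]; omega)]
      omega
    obtain ⟨w, hw⟩ := Complex.exists_root hdeg
    exact ⟨w, by simpa [sub_eq_zero] using hw⟩
  have hgw : gg P w = 0 := by
    have h := gg_fun P hd w
    rw [hw] at h
    have hd' : (2 : ℝ) ≤ P.natDegree := by exact_mod_cast hd
    have h3 := gg_nonneg P hd w
    nlinarith
  set Q : ℕ → Polynomial ℂ := fun n => PP P n - Polynomial.C w with hQ
  have hQe : ∀ n z, (Q n).eval z = (fun w => P.eval w)^[n] z - w := by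
    intro n z
    simp [hQ, PP_eval]
  have hQd : ∀ n, 0 < (Q n).degree := fun n => QQ_deg P hd n w
  have hroot : ∀ n, ∀ z ∈ (Q n).roots.toFinset, gg P z = 0 := by
    intro n z hz
    have h0 := (Polynomial.mem_roots'.1 (Multiset.mem_toFinset.1 hz)).2
    rw [Polynomial.IsRoot, hQe, sub_eq_zero] at h0
    have := gg_iter P hd n z
    rw [h0, hgw] at this
    have hd' : (P.natDegree : ℝ) ^ n ≠ 0 := by
      have : P.natDegree ≠ 0 := by omega
      positivity
    exact (mul_eq_zero.1 this.symm).resolve_left hd'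
  have sw : ∀ η η' : ℝ, 0 ≤ η → η < η' → ∃ n ≥ 1, ∃ R > 0,
      (∀ z, gg P z ≤ η → z ∈ lem (Q n) R) ∧ (∀ z, z ∈ lem (Q n) R → gg P z ≤ η') := by
    intro η η' h0 h
    obtain ⟨n, hn, R, hR, h1, h2⟩ := sandwich P hd w h0 h
    refine ⟨n, hn, R, hR, fun z hz => ?_, fun z hz => h2 z ?_⟩
    · show ‖(Q n).eval z‖ < R
      rw [hQe]; exact h1 z hz
    · have : ‖(Q n).eval z‖ < R := hz
      rwa [hQe] at this
  set U : Set ℂ := {z : ℂ | gg P z < G} with hU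
  have hUo : IsOpen U := isOpen_lt (gg_cont P hd) continuous_const
  obtain ⟨n₀, -, R₀, hR₀, hin₀, hout₀⟩ := sw γ ((γ + G) / 2) hγ0 (by linarith)
  set Z := (Q n₀).roots.toFinset with hZ
  have hsub₀ : lem (Q n₀) R₀ ⊆ U := fun z hz => by
    have := hout₀ z hz
    show gg P z < G
    linarith
  have hj₀ : ∀ y, gg P y = 0 → ∃ z ∈ Z, JoinedIn (lem (Q n₀) R₀) y z := fun y hy =>
    join_root (hQd n₀) (hin₀ y (by linarith))
  have hZU : ∀ z ∈ Z, z ∈ U := fun z hz => by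
    show gg P z < G
    rw [hroot n₀ z hz]; exact hG
  have hjU : ∀ x ∈ U, ∃ z ∈ Z, JoinedIn U x z := by
    intro x hx
    have hx' : gg P x < G := hx
    obtain ⟨n, -, R, hR, hin, hout⟩ := sw (max γ (gg P x)) ((max γ (gg P x) + G) / 2)
      (hγ0.trans (le_max_left _ _)) (by have := max_lt hγG hx'; linarith)
    have hs : lem (Q n) R ⊆ U := fun z hz => by
      have := hout z hz
      have := max_lt hγG hx'
      show gg P z < G
      linarith
    obtain ⟨y, hy, hj⟩ := join_root (hQd n) (hin x (le_max_right _ _))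
    obtain ⟨z, hz, hj2⟩ := hj₀ y (hroot n y hy)
    exact ⟨z, hz, (hj.mono hs).trans (hj2.mono hsub₀)⟩
  -- a level that already joins everything
  obtain ⟨η, hη0, hηG, hη⟩ : ∃ η, (γ + G) / 2 < η ∧ η < G ∧
      ∀ x y : Z, JoinedIn U (x : ℂ) y → JoinedIn {z | gg P z ≤ η} (x : ℂ) y := by
    have h1 : ∀ x y : Z, ∀ᶠ η in 𝓝[<] G,
        JoinedIn U (x : ℂ) y → JoinedIn {z | gg P z ≤ η} (x : ℂ) y := by
      intro x y
      by_cases hj : JoinedIn U (x : ℂ) y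
      · obtain ⟨p, hp, hj'⟩ := joined_lt (gg_cont P hd) hj
        have hp' : gg P p < G := hp
        filter_upwards [Ioo_mem_nhdsLT hp'] with η hη _
        exact hj'.mono (fun u hu => show gg P u ≤ η from
          le_trans (show gg P u ≤ gg P p from hu) hη.1.le)
      · exact Eventually.of_forall fun _ h' => absurd h' hj
    have h1' := eventually_all.2 fun x => eventually_all.2 (h1 x)
    obtain ⟨η, h2, h3⟩ := (h1'.and
      (Ioo_mem_nhdsLT (show (γ + G) / 2 < G by linarith))).exists
    exact ⟨η, h3.1, h3.2, h2⟩
  obtain ⟨n, hn, R, hR, hin, hout⟩ := sw η ((η + G) / 2) (by linarith) (by linarith)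
  have hsub : lem (Q n) R ⊆ U := fun z hz => by
    have := hout z hz
    show gg P z < G
    linarith
  have hV : Vsub Z U = Vsub Z (lem (Q n) R) := by
    apply le_antisymm (Vsub_anti hsub)
    intro v hv x y hj
    exact hv x y ((hη x y hj).mono fun z hz => hin z hz)
  have hsub₁ : lem (Q n₀) R₀ ⊆ lem (Q n) R := fun z hz => hin z (by
    have := hout₀ z hz
    linarith)
  have c1 := card_cc hUo hZU hjU
  have c2 := card_cc (Z := Z) (lem_open (Q n) R)
    (fun z hz => hin z (by rw [hroot n₀ z hz]; linarith))
    (fun x hx => by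
      obtain ⟨y, hy, hj⟩ := join_root (hQd n) hx
      obtain ⟨z, hz, hj2⟩ := hj₀ y (hroot n y hy)
      exact ⟨z, hz, hj.trans (hj2.mono hsub₁)⟩)
  have c3 := card_cc (Z := (Q n).roots.toFinset) (lem_open (Q n) R)
    (fun z hz => hin z (by rw [hroot n z hz]; linarith))
    (fun x hx => join_root (hQd n) hx)
  have c4 : Module.finrank ℝ (Vsub (Q n).roots.toFinset (lem (Q n) R)) = 1 + bb (Q n) R :=
    lemniscate_count (hQd n) hR
  rw [c1, hV, ← c2, c3, c4]
  congr 1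
  obtain ⟨k, rfl⟩ : ∃ k, n = k + 1 := ⟨n - 1, by omega⟩
  obtain ⟨hc1, hc2⟩ := PP_crit P hd hG hγ hγG hle hlt k
  rw [← hc2]
  unfold bb
  have hQder : (Q (k + 1)).derivative = (PP P (k + 1)).derivative := by simp [hQ]
  rw [hQder]
  congr 1
  apply Multiset.filter_congr
  intro c hc
  constructor
  · intro h
    rcases hc1 c hc with h' | h'
    · exact h'
    · have : ‖(Q (k + 1)).eval c‖ < R := hin c (by linarith)
      linarith
  · intro h
    by_contra hcon
    have := hout c (not_le.1 hcon)
    linarith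


lemma Pca_deriv_aux (d : ℕ) (hd : 3 ≤ d) (c : Fin (d - 2) → ℂ) :
    (Polynomial.X : Polynomial ℂ) ^ (d - 1) +
      ∑ j ∈ Finset.Icc 2 (d - 1),
        Polynomial.C ((-1 : ℂ) ^ (d - j) * sigmaE c (d - j)) * Polynomial.X ^ (j - 1) =
    ((Finset.univ.val.map (critPt c)).map fun t => Polynomial.X - Polynomial.C t).prod := by
  have h1 : ((Finset.univ.val.map (critPt c)).map fun t => Polynomial.X - Polynomial.C t).prod
      = Polynomial.X *
        ((Finset.univ.val.map c).map fun t => Polynomial.X - Polynomial.C t).prod := by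
    rw [Multiset.map_map, Multiset.map_map]
    obtain ⟨m, rfl⟩ : ∃ m, d = m + 2 := ⟨d - 2, by omega⟩
    change ∏ i : Fin (m + 1), (Polynomial.X - Polynomial.C (critPt c i)) =
      Polynomial.X * ∏ i : Fin m, (Polynomial.X - Polynomial.C (c i))
    rw [Fin.prod_univ_succ]
    congr 1
    simp [critPt]
  rw [h1, Multiset.prod_X_sub_X_eq_sum_esymm, Finset.mul_sum]
  have hc : Multiset.card (Finset.univ.val.map c) = d - 2 := by simp
  rw [hc, Finset.sum_range_succ']
  rw [add_comm]
  congr 1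
  · refine Finset.sum_bij' (fun j _ => d - j - 1) (fun i _ => d - 1 - i) ?_ ?_ ?_ ?_ ?_
    · intro j hj
      simp only [Finset.mem_Icc, Finset.mem_range] at hj ⊢
      omega
    · intro j hj
      simp only [Finset.mem_Icc, Finset.mem_range] at hj ⊢
      omega
    · intro j hj
      simp only [Finset.mem_Icc] at hj
      omega
    · intro j hj
      simp only [Finset.mem_range] at hj
      omega
    · intro j hj
      simp only [Finset.mem_Icc] at hj
      have e1 : d - j - 1 + 1 = d - j := by omega
      have e2 : j - 1 = (d - 2 - (d - j)) + 1 := by omega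
      rw [e1, e2]
      simp only [sigmaE, map_mul, map_pow, map_neg, map_one, pow_succ]
      ring
  · have e : d - 1 = d - 2 + 1 := by omega
    rw [e]
    simp [Multiset.esymm, pow_succ']

noncomputable def Ppoly (d : ℕ) (c : Fin (d - 2) → ℂ) (a : ℂ) : Polynomial ℂ :=
  Polynomial.C ((d : ℂ)⁻¹) * Polynomial.X ^ d +
    ∑ j ∈ Finset.Icc 2 (d - 1),
      Polynomial.C ((-1 : ℂ) ^ (d - j) * sigmaE c (d - j) / (j : ℂ)) * Polynomial.X ^ j +
    Polynomial.C (a ^ d)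

lemma Ppoly_eval (d : ℕ) (c : Fin (d - 2) → ℂ) (a z : ℂ) :
    (Ppoly d c a).eval z = Pca d c a z := by
  simp only [Ppoly, Pca, Polynomial.eval_add, Polynomial.eval_mul, Polynomial.eval_C,
    Polynomial.eval_pow, Polynomial.eval_X, Polynomial.eval_finsetSum]
  congr 2
  · rw [div_eq_mul_inv]; ring
  · apply Finset.sum_congr rfl
    intro j _
    ring

lemma Ppoly_deriv (d : ℕ) (hd : 3 ≤ d) (c : Fin (d - 2) → ℂ) (a : ℂ) :
    (Ppoly d c a).derivative =
      ((Finset.univ.val.map (critPt c)).map fun t => Polynomial.X - Polynomial.C t).prod := by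
  rw [← Pca_deriv_aux d hd c, Ppoly]
  simp only [Polynomial.derivative_add, Polynomial.derivative_C, add_zero,
    Polynomial.derivative_sum, Polynomial.derivative_C_mul_X_pow]
  congr 1
  · have : (d : ℂ) ≠ 0 := by
      have : d ≠ 0 := by omega
      exact_mod_cast this
    rw [inv_mul_cancel₀ this]
    simp
  · apply Finset.sum_congr rfl
    intro j hj
    have : (j : ℂ) ≠ 0 := by
      have : j ≠ 0 := by
        have := (Finset.mem_Icc.1 hj).1
        omega
      exact_mod_cast this
    rw [div_mul_cancel₀ _ this]

lemma Ppoly_natDegree (d : ℕ) (hd : 3 ≤ d) (c : Fin (d - 2) → ℂ) (a : ℂ) :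
    (Ppoly d c a).natDegree = d := by
  have h1 := Polynomial.natDegree_derivative (Ppoly d c a)
  rw [Ppoly_deriv d hd, Polynomial.natDegree_multiset_prod_X_sub_C_eq_card] at h1
  simp at h1
  omega

theorem stmt3 (d : ℕ) (hd : 3 ≤ d) (c : Fin (d - 2) → ℂ) (a : ℂ)
    (hG : 0 < Gmax d c a) :
    Nat.card (ConnectedComponents ↥{z : ℂ | green d c a z < Gmax d c a})
      = d - (Finset.univ.filter
          fun i : Fin (d - 1) => green d c a (critPt c i) < Gmax d c a).card := by
  classical
  have hdeg := Ppoly_natDegree d hd c a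
  have hg : green d c a = gg (Ppoly d c a) := by
    funext z
    have hf : Pca d c a = fun w => (Ppoly d c a).eval w := by
      funext w; rw [Ppoly_eval]
    simp only [green, gg, uu, hdeg, hf]
  have hroots : (Ppoly d c a).derivative.roots = Finset.univ.val.map (critPt c) := by
    rw [Ppoly_deriv d hd, Polynomial.roots_multiset_prod_X_sub_C]
  have hle : ∀ x ∈ (Ppoly d c a).derivative.roots, gg (Ppoly d c a) x ≤ Gmax d c a := by
    intro x hx
    rw [hroots] at hx
    obtain ⟨i, _, rfl⟩ := Multiset.mem_map.1 hx
    rw [← hg]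
    exact le_ciSup (f := fun i => green d c a (critPt c i)) (Set.finite_range _).bddAbove i
  have main := abstract_main (Ppoly d c a) (by omega) hG hle
  rw [← hg, hroots, Multiset.filter_map, Multiset.card_map] at main
  rw [main]
  have hsplit := Finset.card_filter_add_card_filter_not (s := (Finset.univ : Finset (Fin (d - 1))))
    (fun i => green d c a (critPt c i) < Gmax d c a)
  have e : (Multiset.filter ((fun x => Gmax d c a ≤ green d c a x) ∘ critPt c)
      (Finset.univ : Finset (Fin (d - 1))).val).card =
      (Finset.univ.filter fun i : Fin (d - 1) =>
        ¬ green d c a (critPt c i) < Gmax d c a).card := by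
    simp only [not_lt]
    rfl
  rw [Finset.card_univ, Fintype.card_fin] at hsplit
  convert (show 1 + _ = d - _ from ?_) using 2
  rw [e]
  omega
end
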